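/- (Frequency-localized symbol bound) Let P_k(ξ) = φ(1.1^{−k}ξ) be Littlewood–Paley cutoffs built from a smooth radial φ supported in {1/1.04 ≤ |ξ| ≤ 1.04·1.1}. Consider the symbol m(ξ,η_n,η_{n−1}) = P_k(ξ)P_{k_n}(η_n)P_{k_{n+1}}(η_{n−1}−η_n)P_{k_n'}(2η_n−η_{n−1}) / (|ξ|² − |η_n|² − |η_{n−1}−η_n|²) in the regime k_n' ≤ k_n − 10 and |k_{n+1}−k_n| ≤ 2, |k−k_n'| ≤ 2 where the denominator is nonvanishing on the support. Then ‖𝓕⁻¹ m‖_{L¹} ≲ 1.1^{−2k_n}, uniformly in the localization parameters. -/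

import Mathlib

open MeasureTheory Filter
open scoped ENNReal NNReal BigOperators

noncomputable section

abbrev R3 := Fin 3 → ℝ

/-- Fourier transform on ℝ³ with kernel e^{-i x·ξ}. -/
noncomputable def ft (f : R3 → ℂ) (ξ : R3) : ℂ :=
  ∫ x : R3, Complex.exp (-Complex.I * ((∑ i, x i * ξ i : ℝ) : ℂ)) * f x

/-- Inverse Fourier transform on ℝ³. -/
noncomputable def ift (g : R3 → ℂ) (x : R3) : ℂ :=
  (((2 * Real.pi) ^ 3 : ℝ) : ℂ)⁻¹ *
    ∫ ξ : R3, Complex.exp (Complex.I * ((∑ i, x i * ξ i : ℝ) : ℂ)) * g ξ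

/-- Free Schrödinger evolution `e^{itΔ}`, defined on the Fourier side by `e^{-it|ξ|²}`. -/
noncomputable def schrod (t : ℝ) (f : R3 → ℂ) : R3 → ℂ :=
  ift fun ξ => Complex.exp (-Complex.I * (t : ℂ) * ((∑ i, ξ i ^ 2 : ℝ) : ℂ)) * ft f ξ

/-- `L^p` norm on ℝ³. -/
noncomputable def LpN (p : ℝ) (f : R3 → ℂ) : ℝ :=
  (∫ x : R3, ‖f x‖ ^ p) ^ (1 / p)

/-- Mixed norm `L^p_t L^q_x`. -/
noncomputable def LpLqNorm (p q : ℝ) (F : ℝ → R3 → ℂ) : ℝ :=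
  (∫ t : ℝ, ((∫ x : R3, ‖F t x‖ ^ q) ^ (1 / q)) ^ p) ^ (1 / p)

/-- Mixed norm `L^∞_{x_j} L²_{x̃_j, t}`. -/
noncomputable def supL2 (j : Fin 3) (G : R3 → ℝ → ℂ) : ℝ :=
  ⨆ a : ℝ, (∫ p : (Fin 2 → ℝ) × ℝ, ‖G (j.insertNth a p.1) p.2‖ ^ 2) ^ (1/2 : ℝ)

/-- Mixed norm `L¹_{x_j} L²_{t, x̃_j}`. -/
noncomputable def l1L2 (j : Fin 3) (G : R3 → ℝ → ℂ) : ℝ :=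
  ∫ a : ℝ, (∫ p : (Fin 2 → ℝ) × ℝ, ‖G (j.insertNth a p.1) p.2‖ ^ 2) ^ (1/2 : ℝ)

/-- Fractional derivative in direction `j`: Fourier multiplier `|ξ_j|^s`. -/
noncomputable def fracD (s : ℝ) (j : Fin 3) (f : R3 → ℂ) : R3 → ℂ :=
  ift fun ξ => ((|ξ j| ^ s : ℝ) : ℂ) * ft f ξ

/-- `H^{10}` norm defined via the Fourier transform. -/
noncomputable def H10norm (f : R3 → ℂ) : ℝ :=
  (∫ ξ : R3, (1 + ∑ i, ξ i ^ 2) ^ 10 * ‖ft f ξ‖ ^ 2) ^ (1/2 : ℝ)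

/-- Littlewood–Paley projection built from the bump `φ` at scale `1.1^k`. -/
noncomputable def PkP (φ : R3 → ℝ) (k : ℤ) (f : R3 → ℂ) : R3 → ℂ :=
  ift fun ξ => (φ ((1.1 : ℝ) ^ (-k) • ξ) : ℂ) * ft f ξ

/-- The `X` norm: `sup_k ‖∇_ξ (P_k f̂)‖_{L²}`. -/
noncomputable def Xnorm (φ : R3 → ℝ) (f : R3 → ℂ) : ℝ :=
  ⨆ k : ℤ, (∫ ξ : R3,
    ‖fderiv ℝ (fun ζ : R3 => (φ ((1.1 : ℝ) ^ (-k) • ζ) : ℂ) * ft f ζ) ξ‖ ^ 2) ^ (1/2 : ℝ)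

/-- Hypotheses on the Littlewood–Paley bump function: smooth, radial, supported in the
annulus `{1/1.04 ≤ |ξ| ≤ 1.04 × 1.1}`, and forming a partition of unity in dyadic
scales of ratio `1.1`. -/
def LPbump (φ : R3 → ℝ) : Prop :=
  ContDiff ℝ (⊤ : ℕ∞) φ ∧
  (∀ ξ η : R3, (∑ i, ξ i ^ 2) = (∑ i, η i ^ 2) → φ ξ = φ η) ∧
  (∀ ξ : R3, φ ξ ≠ 0 →
    1 / 1.04 ≤ Real.sqrt (∑ i, ξ i ^ 2) ∧ Real.sqrt (∑ i, ξ i ^ 2) ≤ 1.04 * 1.1) ∧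
  (∀ ξ : R3, ξ ≠ 0 → ∑' j : ℤ, φ ((1.1 : ℝ) ^ (-j) • ξ) = 1)

/-- Inverse Fourier transform on ℝ³ × ℝ³ × ℝ³ ≅ ℝ⁹. -/
noncomputable def ift9 (g : R3 × R3 × R3 → ℂ) (x : R3 × R3 × R3) : ℂ :=
  (((2 * Real.pi) ^ 9 : ℝ) : ℂ)⁻¹ *
    ∫ ξ : R3 × R3 × R3, Complex.exp (Complex.I *
      ((∑ i, x.1 i * ξ.1 i + ∑ i, x.2.1 i * ξ.2.1 i + ∑ i, x.2.2 i * ξ.2.2 i : ℝ) : ℂ)) * g ξ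

/-- The Littlewood–Paley cutoff symbol `P_k(ξ) = φ(1.1^{−k}ξ)`. -/
noncomputable def cutoff (φ : R3 → ℝ) (k : ℤ) (ξ : R3) : ℝ := φ ((1.1 : ℝ) ^ (-k) • ξ)

abbrev X9 := R3 × R3 × R3

instance instHaar6 : (volume : Measure (R3 × R3)).IsAddHaarMeasure :=
  Measure.prod.instIsAddHaarMeasure (volume : Measure R3) (volume : Measure R3)

instance instHaar9 : (volume : Measure X9).IsAddHaarMeasure :=
  Measure.prod.instIsAddHaarMeasure (volume : Measure R3) (volume : Measure (R3 × R3))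

def dot9 (x y : X9) : ℝ :=
  ∑ i, x.1 i * y.1 i + ∑ i, x.2.1 i * y.2.1 i + ∑ i, x.2.2 i * y.2.2 i

def J9 (g : X9 → ℂ) (x : X9) : ℂ :=
  ∫ z : X9, Complex.exp (Complex.I * ((dot9 x z : ℝ) : ℂ)) * g z

def cA (i : Fin 3) : X9 →L[ℝ] ℝ :=
  (ContinuousLinearMap.proj i).comp (ContinuousLinearMap.fst ℝ R3 (R3 × R3))
def cB (i : Fin 3) : X9 →L[ℝ] ℝ :=
  (ContinuousLinearMap.proj i).comp
    ((ContinuousLinearMap.fst ℝ R3 R3).comp (ContinuousLinearMap.snd ℝ R3 (R3 × R3)))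
def cC (i : Fin 3) : X9 →L[ℝ] ℝ :=
  (ContinuousLinearMap.proj i).comp
    ((ContinuousLinearMap.snd ℝ R3 R3).comp (ContinuousLinearMap.snd ℝ R3 (R3 × R3)))

def L9 : X9 →L[ℝ] X9 →L[ℝ] ℝ :=
  (-(1 / (2 * Real.pi))) • ((∑ i, (cA i).smulRight (cA i)) + (∑ i, (cB i).smulRight (cB i))
    + (∑ i, (cC i).smulRight (cC i)))

lemma L9_apply (v w : X9) : L9 v w = -(1 / (2 * Real.pi)) * dot9 w v := by
  simp only [L9, cA, cB, cC, dot9]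
  simp
  simp only [mul_comm (w.1 _), mul_comm (w.2.1 _), mul_comm (w.2.2 _)]
  ring

lemma dot9_self (w : X9) : ‖w‖ ^ 2 ≤ dot9 w w := by
  have key : ∀ v : R3, ‖v‖ ^ 2 ≤ ∑ i, v i * v i := by
    intro v
    have h : ‖v‖ ≤ Real.sqrt (∑ i, v i * v i) := by
      rw [pi_norm_le_iff_of_nonneg (Real.sqrt_nonneg _)]
      intro i
      apply Real.le_sqrt_of_sq_le
      rw [Real.norm_eq_abs, sq_abs, sq]
      exact Finset.single_le_sum (f := fun i => v i * v i) (fun i _ => mul_self_nonneg _)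
        (Finset.mem_univ i)
    calc ‖v‖ ^ 2 ≤ Real.sqrt (∑ i, v i * v i) ^ 2 := by gcongr
      _ = _ := Real.sq_sqrt (Finset.sum_nonneg fun i _ => mul_self_nonneg _)
  have h1 := key w.1
  have h2 := key w.2.1
  have h3 := key w.2.2
  unfold dot9
  have p1 := sq_nonneg ‖w.1‖
  have p2 := sq_nonneg ‖w.2.1‖
  have p3 := sq_nonneg ‖w.2.2‖
  rw [Prod.norm_def, Prod.norm_def]
  rcases max_cases ‖w.1‖ (max ‖w.2.1‖ ‖w.2.2‖) with h | h
  · rw [h.1]; linarith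
  · rw [h.1]
    rcases max_cases ‖w.2.1‖ ‖w.2.2‖ with h | h <;> rw [h.1] <;> linarith

lemma J9_eq (g : X9 → ℂ) (w : X9) :
    J9 g w = VectorFourier.fourierIntegral Real.fourierChar volume L9.toLinearMap₁₂ g w := by
  unfold J9 VectorFourier.fourierIntegral
  congr 1
  ext v
  have h : (L9.toLinearMap₁₂ v) w = -(1 / (2 * Real.pi)) * dot9 w v := L9_apply v w
  rw [h, Circle.smul_def, Real.fourierChar_apply, smul_eq_mul]
  congr 2
  push_cast
  have : (Real.pi : ℂ) ≠ 0 := by exact_mod_cast Real.pi_ne_zero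
  field_simp
  try ring

lemma unif_bound {P : Type*} [NormedAddCommGroup P] [NormedSpace ℝ P] (F : P × X9 → ℂ)
    (hF : ContDiff ℝ (⊤ : ℕ∞) F) (hs : ∀ p x, F (p, x) ≠ 0 → ‖x‖ ≤ 2)
    (K : Set P) (hK : IsCompact K) :
    ∃ C, ∀ p ∈ K, ∀ w, ‖J9 (fun x => F (p, x)) w‖ ≤ C * (1 + ‖w‖) ^ (-(10 : ℝ)) := by
  classical
  have hball : IsCompact (Metric.closedBall (0 : X9) 2) := isCompact_closedBall _ _
  have hbd : ∀ n : ℕ, ∃ B, ∀ p ∈ K, ∀ x,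
      ‖iteratedFDeriv ℝ n (fun x => F (p, x)) x‖ ≤
        (Metric.closedBall (0 : X9) 2).indicator (fun _ => B) x := by
    intro n
    have hc : Continuous (iteratedFDeriv ℝ n F) :=
      hF.continuous_iteratedFDeriv (by exact_mod_cast le_top)
    obtain ⟨B, hB⟩ := (hK.prod hball).exists_bound_of_continuousOn hc.continuousOn
    let i : X9 →L[ℝ] P × X9 := ContinuousLinearMap.inr ℝ P X9
    refine ⟨B * ‖i‖ ^ n, fun p hp x => ?_⟩
    by_cases hx : x ∈ Metric.closedBall (0 : X9) 2
    · rw [Set.indicator_of_mem hx]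
      have e : (fun x => F (p, x)) = (fun y => F ((p, 0) + y)) ∘ i := by
        ext x; simp [i]
      rw [e, ContinuousLinearMap.iteratedFDeriv_comp_right (n := (⊤ : ℕ∞)) i
        (f := fun y => F ((p, 0) + y)) (by fun_prop) x
        (by exact_mod_cast le_top), iteratedFDeriv_comp_add_left]
      refine (ContinuousMultilinearMap.norm_compContinuousLinearMap_le _ _).trans ?_
      simp only [Finset.prod_const, Finset.card_univ, Fintype.card_fin]
      gcongr
      have : (p, (0 : X9)) + i x = (p, x) := by simp [i]
      rw [this]
      exact hB (p, x) ⟨hp, hx⟩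
    · rw [Set.indicator_of_notMem hx]
      have : (fun x => F (p, x)) =ᶠ[nhds x] fun _ => 0 := by
        have ho : (Metric.closedBall (0 : X9) 2)ᶜ ∈ nhds x :=
          Metric.isClosed_closedBall.isOpen_compl.mem_nhds hx
        filter_upwards [ho] with y hy
        by_contra hne
        exact hy (by simpa using hs p y hne)
      rw [(this.iteratedFDeriv ℝ n).eq_of_nhds]
      have : (fun _ : X9 => (0 : ℂ)) = 0 := rfl
      simp [this]
  choose B hB using hbd
  have hint : ∀ n : ℕ, Integrable ((Metric.closedBall (0 : X9) 2).indicator (fun _ => B n)) := by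
    intro n
    refine (integrable_indicator_iff Metric.isClosed_closedBall.measurableSet).2 ?_
    exact integrableOn_const hball.measure_lt_top.ne
  set V := fun n : ℕ => ∫ x, (Metric.closedBall (0 : X9) 2).indicator (fun _ => B n) x with hV
  have hp : ∀ p, ContDiff ℝ (⊤ : ℕ∞) (fun x => F (p, x)) := fun p => by fun_prop
  have hi0 : ∀ p ∈ K, ∀ n : ℕ, Integrable (fun x => ‖iteratedFDeriv ℝ n (fun x => F (p, x)) x‖) := by
    intro p hpK n
    refine (hint n).mono' ?_ ?_
    · exact ((hp p).continuous_iteratedFDeriv (m := n)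
        (by exact_mod_cast le_top)).norm.aestronglyMeasurable
    · filter_upwards with x
      rw [norm_norm]
      exact hB n p hpK x
  have main : ∀ p ∈ K, ∀ n : ℕ, ∀ w, ‖w‖ ^ n * ‖J9 (fun x => F (p, x)) w‖ ≤
      (2 * Real.pi) ^ n * (2 ^ n * ∑ q ∈ Finset.range (0 + 1) ×ˢ Finset.range (n + 1), V q.2) := by
    intro p hpK n w
    have h := VectorFourier.pow_mul_norm_iteratedFDeriv_fourierIntegral_le (μ := volume) L9
      (K := 0) (N := ⊤) (f := fun x => F (p, x)) (hp p) (by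
        intro k n hk _
        have : k = 0 := by simpa using hk
        subst this
        simpa using hi0 p hpK n) (k := 0) (n := n) (by simp) (by simp) w w
    rw [norm_iteratedFDeriv_zero, ← J9_eq] at h
    have h2 : ∑ q ∈ Finset.range (0 + 1) ×ˢ Finset.range (n + 1),
          ∫ v, ‖v‖ ^ q.1 * ‖iteratedFDeriv ℝ q.2 (fun x => F (p, x)) v‖ ≤
        ∑ q ∈ Finset.range (0 + 1) ×ˢ Finset.range (n + 1), V q.2 := by
      apply Finset.sum_le_sum
      intro q hq
      have : q.1 = 0 := by
        have := (Finset.mem_product.1 hq).1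
        simpa using this
      simp only [this, pow_zero, one_mul]
      exact integral_mono (hi0 p hpK q.2) (hint q.2) (hB q.2 p hpK)
    set S := ∑ q ∈ Finset.range (0 + 1) ×ˢ Finset.range (n + 1),
          ∫ v, ‖v‖ ^ q.1 * ‖iteratedFDeriv ℝ q.2 (fun x => F (p, x)) v‖
    set S' := ∑ q ∈ Finset.range (0 + 1) ×ˢ Finset.range (n + 1), V q.2
    have hS0 : 0 ≤ S := Finset.sum_nonneg fun q _ => integral_nonneg fun v => by positivity
    rw [L9_apply, abs_mul, abs_neg, abs_of_pos (by positivity)] at h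
    have hd := dot9_self w
    rw [abs_of_nonneg ((sq_nonneg _).trans hd)] at h
    simp only [pow_zero, mul_one, Nat.cast_zero, mul_zero, zero_add] at h
    rcases eq_or_lt_of_le (norm_nonneg w) with h0 | h0
    · rcases Nat.eq_zero_or_pos n with hn | hn
      · subst hn
        simp only [pow_zero, one_mul] at h ⊢
        exact h.trans (by simpa using h2)
      · rw [← h0, zero_pow hn.ne', zero_mul]
        have : 0 ≤ S' := hS0.trans h2
        positivity
    · have h3 : (1 / (2 * Real.pi) * ‖w‖ ^ 2) ^ n * ‖J9 (fun x => F (p, x)) w‖ ≤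
          ‖w‖ ^ n * 2 ^ n * S' := by
        refine le_trans ?_ (h.trans ?_)
        · gcongr
        · gcongr
      have h4 : (1 / (2 * Real.pi) * ‖w‖ ^ 2) ^ n = ‖w‖ ^ n * ‖w‖ ^ n / (2 * Real.pi) ^ n := by
        rw [mul_pow, div_pow, one_pow, ← pow_mul, mul_comm 2 n, pow_mul, sq]
        ring
      rw [h4] at h3
      have hw : 0 < ‖w‖ ^ n := by positivity
      refine le_of_mul_le_mul_left ?_ hw
      have hpi : 0 < (2 * Real.pi) ^ n := by positivity
      calc ‖w‖ ^ n * (‖w‖ ^ n * ‖J9 (fun x => F (p, x)) w‖)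
          = (2 * Real.pi) ^ n * (‖w‖ ^ n * ‖w‖ ^ n / (2 * Real.pi) ^ n *
              ‖J9 (fun x => F (p, x)) w‖) := by field_simp
        _ ≤ (2 * Real.pi) ^ n * (‖w‖ ^ n * 2 ^ n * S') := by gcongr
        _ = _ := by ring
  have key : ∀ a b : ℝ, ∃ C, ∀ p ∈ K, ∀ w,
      ‖J9 (fun x => F (p, x)) w‖ ≤ a → ‖w‖ ^ 10 * ‖J9 (fun x => F (p, x)) w‖ ≤ b →
      ‖J9 (fun x => F (p, x)) w‖ ≤ C * (1 + ‖w‖) ^ (-(10 : ℝ)) := by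
    intro a b
    refine ⟨2 ^ 10 * (a + b), fun p hpK w a0 a1 => ?_⟩
    have := pow_mul_le_of_le_of_pow_mul_le (k := 0) (l := 10) (norm_nonneg w)
      (norm_nonneg (J9 (fun x => F (p, x)) w)) a0 (by simpa using a1)
    rw [pow_zero, one_mul] at this
    refine this.trans (le_of_eq ?_)
    norm_num
  obtain ⟨C, hC⟩ := key _ _
  refine ⟨C, fun p hpK w => hC p hpK w ?_ (main p hpK 10 w)⟩
  have a0 := main p hpK 0 w
  rw [pow_zero, one_mul] at a0
  exact a0

lemma unif_L1 {P : Type*} [NormedAddCommGroup P] [NormedSpace ℝ P] (F : P × X9 → ℂ)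
    (hF : ContDiff ℝ (⊤ : ℕ∞) F) (hs : ∀ p x, F (p, x) ≠ 0 → ‖x‖ ≤ 2)
    (K : Set P) (hK : IsCompact K) :
    ∃ C, ∀ p ∈ K, ∫ w, ‖J9 (fun x => F (p, x)) w‖ ≤ C := by
  obtain ⟨C, hC⟩ := unif_bound F hF hs K hK
  refine ⟨∫ w : X9, C * (1 + ‖w‖) ^ (-(10 : ℝ)), fun p hp => ?_⟩
  refine integral_mono_of_nonneg (ae_of_all _ fun w => norm_nonneg _) ?_
    (ae_of_all _ fun w => hC p hp w)
  refine Integrable.const_mul ?_ _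
  apply integrable_one_add_norm
  simp
  norm_num

lemma cov9 {E : Type*} [NormedAddCommGroup E] [NormedSpace ℝ E] (T : X9 →L[ℝ] X9)
    (hT : Function.Bijective T) (g : X9 → E) :
    ∫ x, g x = |T.det| • ∫ x, g (T x) := by
  have h := integral_image_eq_integral_abs_det_fderiv_smul (volume : Measure X9)
    (s := Set.univ) (f := T) (f' := fun _ => T) MeasurableSet.univ
    (fun x _ => T.hasFDerivAt.hasFDerivWithinAt) hT.1.injOn g
  rw [Set.image_univ, hT.2.range_eq, setIntegral_univ, setIntegral_univ, integral_smul] at h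
  exact h

def pu : X9 →L[ℝ] R3 := ContinuousLinearMap.fst ℝ R3 (R3 × R3)
def pv : X9 →L[ℝ] R3 :=
  (ContinuousLinearMap.fst ℝ R3 R3).comp (ContinuousLinearMap.snd ℝ R3 (R3 × R3))
def pw : X9 →L[ℝ] R3 :=
  (ContinuousLinearMap.snd ℝ R3 R3).comp (ContinuousLinearMap.snd ℝ R3 (R3 × R3))

def Sm : X9 →L[ℝ] X9 := pu.prod (pv.prod ((2 : ℝ) • pv - pw))
def St : X9 →L[ℝ] X9 := pu.prod ((pv + (2 : ℝ) • pw).prod (-pw))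
def Dg (a b c : ℝ) : X9 →L[ℝ] X9 := (a • pu).prod ((b • pv).prod (c • pw))

lemma Sm_apply (x : X9) : Sm x = (x.1, x.2.1, (2 : ℝ) • x.2.1 - x.2.2) := rfl
lemma St_apply (x : X9) : St x = (x.1, x.2.1 + (2 : ℝ) • x.2.2, - x.2.2) := rfl
lemma Dg_apply (a b c : ℝ) (x : X9) : Dg a b c x = (a • x.1, b • x.2.1, c • x.2.2) := rfl

lemma Sm_Sm (x : X9) : Sm (Sm x) = x := by
  simp [Sm_apply]
lemma St_St (x : X9) : St (St x) = x := by
  simp [St_apply]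

lemma abs_det_invol (S : X9 →L[ℝ] X9) (h : ∀ x, S (S x) = x) : |S.det| = 1 := by
  have h1 : (S : X9 →ₗ[ℝ] X9) ∘ₗ (S : X9 →ₗ[ℝ] X9) = LinearMap.id := by
    apply LinearMap.ext
    intro x
    exact h x
  have h2 : S.det * S.det = 1 := by
    have := congrArg LinearMap.det h1
    rw [LinearMap.det_comp, LinearMap.det_id] at this
    exact this
  rcases mul_self_eq_one_iff.1 h2 with h | h <;> rw [h] <;> simp

lemma Dg_bij {a b c : ℝ} (ha : a ≠ 0) (hb : b ≠ 0) (hc : c ≠ 0) :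
    Function.Bijective (Dg a b c) := by
  refine Function.bijective_iff_has_inverse.2 ⟨Dg a⁻¹ b⁻¹ c⁻¹, fun x => ?_, fun x => ?_⟩ <;>
  simp [Dg_apply, smul_smul, ha, hb, hc]

lemma dot9_adj (a b c : ℝ) (x z : X9) :
    dot9 x (Sm (Dg a b c z)) = dot9 (Dg a b c (St x)) z := by
  simp only [dot9, Sm_apply, Dg_apply, St_apply, Fin.sum_univ_three, Pi.smul_apply, Pi.sub_apply,
    Pi.add_apply, Pi.neg_apply, smul_eq_mul]
  ring

lemma J9_scale (a b c : ℝ) (ha : a ≠ 0) (hb : b ≠ 0) (hc : c ≠ 0) (m : X9 → ℂ) :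
    ∫ x, ‖J9 m x‖ = ∫ x, ‖J9 (fun z => m (Sm (Dg a b c z))) x‖ := by
  have bS : Function.Bijective Sm := (Function.Involutive.bijective Sm_Sm)
  have bSt : Function.Bijective St := (Function.Involutive.bijective St_St)
  have bD := Dg_bij ha hb hc
  have h1 : ∀ x, J9 m x =
      |(Dg a b c).det| • J9 (fun z => m (Sm (Dg a b c z))) (Dg a b c (St x)) := by
    intro x
    unfold J9
    rw [cov9 Sm bS, abs_det_invol Sm Sm_Sm, one_smul, cov9 (Dg a b c) bD]
    simp only [dot9_adj]
  simp_rw [h1, norm_smul, Real.norm_eq_abs, abs_abs]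
  rw [integral_const_mul]
  set G : X9 → ℝ := fun x => ‖J9 (fun z => m (Sm (Dg a b c z))) x‖ with hG
  have e1 : ∫ x, G x = |(Dg a b c).det| • ∫ x, G (Dg a b c x) := cov9 (Dg a b c) bD G
  have e2 : ∫ x, G (Dg a b c x) = |St.det| • ∫ x, G (Dg a b c (St x)) :=
    cov9 St bSt (fun x => G (Dg a b c x))
  rw [e1, e2, abs_det_invol St St_St, one_smul, smul_eq_mul]

def Den (p : ℝ × ℝ × ℝ) (x : X9) : ℝ :=
  (1 / 4) * Real.sin p.1 ^ 2 * (∑ i, x.1 i ^ 2) - (∑ i, x.2.1 i ^ 2) -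
    (∑ i, (x.2.1 i - p.2.1 * x.2.2 i) ^ 2)

def SyNum (φ : R3 → ℝ) (p : ℝ × ℝ × ℝ) (x : X9) : ℝ :=
  φ x.1 * φ x.2.1 * φ (p.2.2 • (x.2.1 - p.2.1 • x.2.2)) * φ x.2.2

lemma supp_sq {φ : R3 → ℝ} (hφ : LPbump φ) (v : R3) (h : φ v ≠ 0) :
    0.92 ≤ ∑ i, v i ^ 2 ∧ ∑ i, v i ^ 2 ≤ 1.31 := by
  obtain ⟨h1, h2⟩ := hφ.2.2.1 v h
  have h0 : 0 ≤ ∑ i, v i ^ 2 := Finset.sum_nonneg fun i _ => sq_nonneg _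
  have hs := Real.sq_sqrt h0
  have hn := Real.sqrt_nonneg (∑ i, v i ^ 2)
  norm_num at h1 h2
  constructor <;> norm_num <;> nlinarith

lemma Den_neg (p : ℝ × ℝ × ℝ) (x : X9) (h1 : ∑ i, x.1 i ^ 2 ≤ 1.31)
    (h2 : 0.92 ≤ ∑ i, x.2.1 i ^ 2) : Den p x < 0 := by
  unfold Den
  have h3 : 0 ≤ ∑ i, (x.2.1 i - p.2.1 * x.2.2 i) ^ 2 := Finset.sum_nonneg fun i _ => sq_nonneg _
  have h4 : Real.sin p.1 ^ 2 ≤ 1 := Real.sin_sq_le_one _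
  have h0 : 0 ≤ ∑ i, x.1 i ^ 2 := Finset.sum_nonneg fun i _ => sq_nonneg _
  have h5 : Real.sin p.1 ^ 2 * (∑ i, x.1 i ^ 2) ≤ 1 * 1.31 := by gcongr
  norm_num at *
  linarith

def Sy (φ : R3 → ℝ) (q : (ℝ × ℝ × ℝ) × X9) : ℂ := ((SyNum φ q.1 q.2 / Den q.1 q.2 : ℝ) : ℂ)

lemma Sy_contDiff {φ : R3 → ℝ} (hφ : LPbump φ) : ContDiff ℝ (⊤ : ℕ∞) (Sy φ) := by
  have hsm := hφ.1
  have hN : ContDiff ℝ (⊤ : ℕ∞) (fun q : (ℝ × ℝ × ℝ) × X9 => SyNum φ q.1 q.2) := by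
    unfold SyNum
    fun_prop
  have hD : ContDiff ℝ (⊤ : ℕ∞) (fun q : (ℝ × ℝ × ℝ) × X9 => Den q.1 q.2) := by
    unfold Den
    fun_prop
  refine Complex.ofRealCLM.contDiff.comp (f := fun q : (ℝ × ℝ × ℝ) × X9 =>
    SyNum φ q.1 q.2 / Den q.1 q.2) ?_
  rw [contDiff_iff_contDiffAt]
  intro q
  have hz : (∀ᶠ q' in nhds q, SyNum φ q'.1 q'.2 = 0) →
      ContDiffAt ℝ (⊤ : ℕ∞) (fun q : (ℝ × ℝ × ℝ) × X9 => SyNum φ q.1 q.2 / Den q.1 q.2) q := by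
    intro h
    refine (contDiffAt_const (c := (0 : ℝ))).congr_of_eventuallyEq ?_
    filter_upwards [h] with q' hq'
    rw [hq', zero_div]
  by_cases h1 : ∑ i, q.2.1 i ^ 2 ≤ 1.31
  · by_cases h2 : 0.92 ≤ ∑ i, q.2.2.1 i ^ 2
    · exact hN.contDiffAt.div hD.contDiffAt (Den_neg _ _ h1 h2).ne
    · apply hz
      have ho : IsOpen {q : (ℝ × ℝ × ℝ) × X9 | ∑ i, q.2.2.1 i ^ 2 < 0.92} :=
        isOpen_lt (by fun_prop) (by fun_prop)
      filter_upwards [ho.mem_nhds (not_le.1 h2)] with q' hq'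
      have : φ q'.2.2.1 = 0 := by
        by_contra hne
        exact absurd (supp_sq hφ _ hne).1 (not_le.2 hq')
      simp [SyNum, this]
  · apply hz
    have ho : IsOpen {q : (ℝ × ℝ × ℝ) × X9 | 1.31 < ∑ i, q.2.1 i ^ 2} :=
      isOpen_lt (by fun_prop) (by fun_prop)
    filter_upwards [ho.mem_nhds (not_le.1 h1)] with q' hq'
    have : φ q'.2.1 = 0 := by
      by_contra hne
      exact absurd (supp_sq hφ _ hne).2 (not_le.2 hq')
    simp [SyNum, this]

lemma norm_le_two (v : R3) (h : ∑ i, v i ^ 2 ≤ 1.31) : ‖v‖ ≤ 2 := by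
  rw [pi_norm_le_iff_of_nonneg (by norm_num)]
  intro i
  have := Finset.single_le_sum (f := fun i => v i ^ 2) (fun i _ => sq_nonneg _)
        (Finset.mem_univ i)
  rw [Real.norm_eq_abs]
  apply abs_le_of_sq_le_sq _ (by norm_num)
  norm_num at *
  linarith

lemma Sy_supp {φ : R3 → ℝ} (hφ : LPbump φ) (p : ℝ × ℝ × ℝ) (x : X9) (h : Sy φ (p, x) ≠ 0) :
    ‖x‖ ≤ 2 := by
  have hN : SyNum φ p x ≠ 0 := by
    intro h0
    apply h
    simp [Sy, h0]
  unfold SyNum at hN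
  simp only [ne_eq, mul_eq_zero, not_or] at hN
  obtain ⟨⟨⟨h1, h2⟩, _⟩, h3⟩ := hN
  rw [Prod.norm_def, Prod.norm_def]
  exact max_le (norm_le_two _ (supp_sq hφ _ h1).2)
    (max_le (norm_le_two _ (supp_sq hφ _ h2).2) (norm_le_two _ (supp_sq hφ _ h3).2))

lemma ift9_eq (g : X9 → ℂ) (x : X9) :
    ift9 g x = (((2 * Real.pi) ^ 9 : ℝ) : ℂ)⁻¹ * J9 g x := rfl

/-- frequency-localized symbol bound: for the symbol
`m(ξ,η_n,η_{n−1}) = P_k(ξ)P_{k_n}(η_n)P_{k_{n+1}}(η_{n−1}−η_n)P_{k_n'}(2η_n−η_{n−1})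
/ (|ξ|²−|η_n|²−|η_{n−1}−η_n|²)` in the regime `k_n' ≤ k_n − 10`, `|k_{n+1}−k_n| ≤ 2`,
`|k−k_n'| ≤ 2` with nonvanishing denominator on the support,
one has `‖𝓕⁻¹m‖_{L¹} ≲ 1.1^{−2k_n}` uniformly in the localization parameters. -/
theorem stmt17 (φ : R3 → ℝ) (hφ : LPbump φ) :
    ∃ C > 0, ∀ k kn kn1 kn' : ℤ,
      kn' ≤ kn - 10 → |kn1 - kn| ≤ 2 → |k - kn'| ≤ 2 →
      (∀ ξ ηn ηm : R3,
        cutoff φ k ξ * cutoff φ kn ηn * cutoff φ kn1 (ηm - ηn) *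
          cutoff φ kn' ((2 : ℝ) • ηn - ηm) ≠ 0 →
        (∑ i, ξ i ^ 2) - (∑ i, ηn i ^ 2) - (∑ i, (ηm i - ηn i) ^ 2) ≠ 0) →
      (∫ x : R3 × R3 × R3, ‖ift9 (fun z =>
          ((cutoff φ k z.1 * cutoff φ kn z.2.1 * cutoff φ kn1 (z.2.2 - z.2.1) *
            cutoff φ kn' ((2 : ℝ) • z.2.1 - z.2.2) : ℝ) : ℂ) /
          (((∑ i, z.1 i ^ 2) - (∑ i, z.2.1 i ^ 2) -
            (∑ i, (z.2.2 i - z.2.1 i) ^ 2) : ℝ) : ℂ)) x‖) ≤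
        C * (1.1 : ℝ) ^ (-(2 * kn)) := by
  obtain ⟨C, hC⟩ := unif_L1 (Sy φ) (Sy_contDiff hφ) (Sy_supp hφ)
    (Set.Icc (-4) 4 ×ˢ (Set.Icc (-4) 4 ×ˢ Set.Icc (-4) 4))
    (isCompact_Icc.prod (isCompact_Icc.prod isCompact_Icc))
  refine ⟨((2 * Real.pi) ^ 9)⁻¹ * (|C| + 1), by positivity, ?_⟩
  intro k kn kn1 kn' hk1 hk2 hk3 _
  have hpos : ∀ j : ℤ, (0 : ℝ) < (1.1 : ℝ) ^ j := fun j => zpow_pos (by norm_num) j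
  have hmono : ∀ i j : ℤ, i ≤ j → (1.1 : ℝ) ^ i ≤ (1.1 : ℝ) ^ j := fun i j h =>
    zpow_le_zpow_right₀ (by norm_num) h
  have hadd : ∀ i j : ℤ, (1.1 : ℝ) ^ (i + j) = (1.1 : ℝ) ^ i * (1.1 : ℝ) ^ j := fun i j =>
    zpow_add₀ (by norm_num) i j
  rw [abs_le] at hk2 hk3
  set s : ℝ := (1.1 : ℝ) ^ (k - kn) with hs
  set t : ℝ := (1.1 : ℝ) ^ (kn' - kn) with ht
  set r : ℝ := (1.1 : ℝ) ^ (kn - kn1) with hr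
  have hs1 : 2 * s ≤ 1 := by
    have h1 : s ≤ (1.1 : ℝ) ^ (-8 : ℤ) := hmono _ _ (by omega)
    have h2 : (1.1 : ℝ) ^ (-8 : ℤ) ≤ 1 / 2 := by norm_num
    linarith
  have ht1 : t ≤ 1 := by
    have h1 : t ≤ (1.1 : ℝ) ^ (0 : ℤ) := hmono _ _ (by omega)
    simpa using h1
  have hr1 : r ≤ 4 := by
    have h1 : r ≤ (1.1 : ℝ) ^ (2 : ℤ) := hmono _ _ (by omega)
    have h2 : (1.1 : ℝ) ^ (2 : ℤ) ≤ 4 := by norm_num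
    linarith
  have hs0 : 0 < s := hpos _
  have ht0 : 0 < t := hpos _
  have hr0 : 0 < r := hpos _
  set θ := Real.arcsin (2 * s) with hθ
  have hsin : Real.sin θ = 2 * s := Real.sin_arcsin (by linarith) hs1
  have hθ4 : θ ∈ Set.Icc (-4 : ℝ) 4 := by
    have h1 := Real.neg_pi_div_two_le_arcsin (2 * s)
    have h2 := Real.arcsin_le_pi_div_two (2 * s)
    have h3 := Real.pi_lt_four
    constructor <;> linarith
  have hB := hC (θ, t, r) ⟨hθ4, ⟨by constructor <;> linarith, by constructor <;> linarith⟩⟩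
  set m : X9 → ℂ := fun z =>
          ((cutoff φ k z.1 * cutoff φ kn z.2.1 * cutoff φ kn1 (z.2.2 - z.2.1) *
            cutoff φ kn' ((2 : ℝ) • z.2.1 - z.2.2) : ℝ) : ℂ) /
          (((∑ i, z.1 i ^ 2) - (∑ i, z.2.1 i ^ 2) -
            (∑ i, (z.2.2 i - z.2.1 i) ^ 2) : ℝ) : ℂ) with hm
  have ea : (1.1 : ℝ) ^ k = s * (1.1 : ℝ) ^ kn := by rw [hs, ← hadd]; congr 1; ring
  have ec : (1.1 : ℝ) ^ kn' = t * (1.1 : ℝ) ^ kn := by rw [ht, ← hadd]; congr 1; ring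
  have er : (1.1 : ℝ) ^ (-kn1) * (1.1 : ℝ) ^ kn = r := by rw [hr, ← hadd]; congr 1; ring
  have einv : ∀ j : ℤ, (1.1 : ℝ) ^ (-j) * (1.1 : ℝ) ^ j = 1 := fun j => by
    rw [← hadd]; simp
  have hcut : ∀ (j : ℤ) (v : R3), cutoff φ j ((1.1 : ℝ) ^ j • v) = φ v := by
    intro j v
    rw [cutoff, smul_smul, einv, one_smul]
  have e2 : (1.1 : ℝ) ^ (-(2 * kn)) = ((1.1 : ℝ) ^ kn * (1.1 : ℝ) ^ kn)⁻¹ := by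
    rw [zpow_neg, ← hadd, two_mul]
  have hmT : (fun z => m (Sm (Dg ((1.1 : ℝ) ^ k) ((1.1 : ℝ) ^ kn) ((1.1 : ℝ) ^ kn') z))) =
      fun z => (((1.1 : ℝ) ^ (-(2 * kn)) : ℝ) : ℂ) * Sy φ ((θ, t, r), z) := by
    funext z
    simp only [hm, Sm_apply, Dg_apply, Sy]
    rw [← Complex.ofReal_div, ← Complex.ofReal_mul]
    congr 1
    have c3 : cutoff φ kn1 ((2 : ℝ) • (1.1 : ℝ) ^ kn • z.2.1 - (1.1 : ℝ) ^ kn' • z.2.2 -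
        (1.1 : ℝ) ^ kn • z.2.1) = φ (r • (z.2.1 - t • z.2.2)) := by
      rw [cutoff, ← er, ec]
      congr 1
      module
    have c4 : cutoff φ kn' ((2 : ℝ) • (1.1 : ℝ) ^ kn • z.2.1 -
        ((2 : ℝ) • (1.1 : ℝ) ^ kn • z.2.1 - (1.1 : ℝ) ^ kn' • z.2.2)) = φ z.2.2 := by
      rw [sub_sub_cancel, hcut]
    rw [c3, c4, hcut, hcut]
    have hden : (∑ i, ((1.1 : ℝ) ^ k • z.1) i ^ 2) - (∑ i, ((1.1 : ℝ) ^ kn • z.2.1) i ^ 2) -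
        (∑ i, (((2 : ℝ) • (1.1 : ℝ) ^ kn • z.2.1 - (1.1 : ℝ) ^ kn' • z.2.2) i -
          ((1.1 : ℝ) ^ kn • z.2.1) i) ^ 2) =
        ((1.1 : ℝ) ^ kn * (1.1 : ℝ) ^ kn) * Den (θ, t, r) z := by
      simp only [Den, hsin, ea, ec, Fin.sum_univ_three, Pi.smul_apply, Pi.sub_apply, smul_eq_mul]
      ring
    rw [hden, e2, SyNum, div_eq_mul_inv, mul_inv, div_eq_mul_inv]
    ring
  have hfin : ∫ x, ‖J9 m x‖ = (1.1 : ℝ) ^ (-(2 * kn)) * ∫ x, ‖J9 (fun z => Sy φ ((θ, t, r), z)) x‖ := by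
    rw [J9_scale _ _ _ (hpos k).ne' (hpos kn).ne' (hpos kn').ne' m, hmT, ← integral_const_mul]
    congr 1
    funext x
    have : J9 (fun z => (((1.1 : ℝ) ^ (-(2 * kn)) : ℝ) : ℂ) * Sy φ ((θ, t, r), z)) x =
        (((1.1 : ℝ) ^ (-(2 * kn)) : ℝ) : ℂ) * J9 (fun z => Sy φ ((θ, t, r), z)) x := by
      unfold J9
      rw [← integral_const_mul]
      congr 1
      funext z
      ring
    rw [this, norm_mul, Complex.norm_real, Real.norm_of_nonneg (hpos _).le]
  have hpi : 0 < (2 * Real.pi) ^ 9 := by positivity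
  simp_rw [ift9_eq, norm_mul, norm_inv, Complex.norm_real, Real.norm_of_nonneg hpi.le]
  rw [integral_const_mul, hfin, mul_assoc]
  refine mul_le_mul_of_nonneg_left ?_ (inv_nonneg.2 hpi.le)
  rw [mul_comm]
  refine mul_le_mul_of_nonneg_right ?_ (hpos _).le
  linarith [le_abs_self C]
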